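/- There do not exist a matrix M ∈ S(G153) and real numbers λ_1 < λ_2 < λ_3 such that the characteristic polynomial of M equals (X − λ_1)^3 (X − λ_2) (X − λ_3)^2, and there do not exist such M and λ_1 < λ_2 < λ_3 with characteristic polynomial (X − λ_1)^2 (X − λ_2) (X − λ_3)^3. That is, G153 attains neither ordered multiplicity list (3,1,2) nor (2,1,3). -/

import Mathlib

/-!
Let `l₁ < l₂ < l₃` be the eigenvalues of `M`, with `l₂` simple. On the eigenspaces of `l₁` and `l₃`
the matrix `(M - l₁)(M - l₃)` vanishes, and on the eigenline of `l₂` it is multiplication by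
`(l₂ - l₁)(l₂ - l₃) < 0`. Hence `(M - l₁)(M - l₃) = -w wᵀ` for a real vector `w`
(`exists_rankOne_offDiag`).

Off the diagonal, at non-adjacent `i, j`, this says `(M²)ᵢⱼ = -wᵢ wⱼ`, and `(M²)ᵢⱼ` is the sum of
`Mᵢₖ Mₖⱼ` over the common neighbours `k`. For `G153` (vertices `1, …, 6`) the pairs `35`, `46`, `36`
and `14`, `15`, `24`, `25` combine to
`(M₃₄ M₄₅ M₅₆)² = -(w₁² + w₂²)(w₄ w₅)²`,
which is impossible as the left side is positive. The argument only uses that the middle one of the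
three distinct eigenvalues is simple, so it covers both multiplicity lists.
-/

open Polynomial Matrix

/-- `M ∈ S(G)`: real symmetric matrix whose off-diagonal nonzero pattern is
given exactly by the adjacency of `G`. -/
def inS {V : Type*} (G : SimpleGraph V) (M : Matrix V V ℝ) : Prop :=
  M.IsSymm ∧ ∀ i j : V, i ≠ j → (M i j ≠ 0 ↔ G.Adj i j)

/-- The graph `G153` on vertices 1..6 (encoded as `Fin 6`, vertex `v` is `v.val + 1`). -/
def G153 : SimpleGraph (Fin 6) :=
  SimpleGraph.fromRel (fun i j =>
    ((i : ℕ) + 1, (j : ℕ) + 1) ∈ [(1, 2), (1, 3), (1, 6), (2, 3), (2, 6), (3, 4), (4, 5), (5, 6)])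

/-- If `l₂` is a simple eigenvalue of a real symmetric matrix `M`, and every other eigenvalue is `l₁`
or `l₃` with `l₁ < l₂ < l₃`, then `(M - l₁)(M - l₃) = -w wᵀ` for some vector `w`, namely a scaled
eigenvector of `l₂`. Only the off-diagonal entries are recorded. -/
lemma exists_rankOne_offDiag {n : Type*} [Fintype n] [DecidableEq n] (M : Matrix n n ℝ)
    (hM : M.IsSymm) (a b : ℕ) (l₁ l₂ l₃ : ℝ) (h12 : l₁ < l₂) (h23 : l₂ < l₃)
    (h : M.charpoly = (X - C l₁) ^ a * (X - C l₂) * (X - C l₃) ^ b) :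
    ∃ w : n → ℝ, ∀ i j, i ≠ j → (M * M) i j - (l₁ + l₃) * M i j = -(w i * w j) := by
  have hH : M.IsHermitian := by
    rw [Matrix.IsHermitian, Matrix.conjTranspose_eq_transpose_of_trivial]
    exact hM
  set d := hH.eigenvalues with hd
  have hroots := hH.roots_charpoly_eq_eigenvalues
  have hne : (X - C l₁) ^ a * (X - C l₂) * (X - C l₃) ^ b ≠ 0 :=
    h ▸ M.charpoly_monic.ne_zero
  have hr : M.charpoly.roots = a • {l₁} + {l₂} + b • {l₃} := by
    rw [h, roots_mul hne, roots_mul (left_ne_zero_of_mul hne)]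
    simp
  -- Exactly one index carries the simple eigenvalue `l₂`.
  have hcount : (Finset.univ.filter fun k => l₂ = d k).card = 1 := by
    have h1 : M.charpoly.roots.count l₂ = 1 := by
      rw [hr]
      simp [h12.ne', h23.ne]
    rw [hroots, Multiset.count_map] at h1
    exact h1
  obtain ⟨k₀, hk₀⟩ := Finset.card_eq_one.mp hcount
  have hk₀' : d k₀ = l₂ := by
    have : k₀ ∈ Finset.univ.filter fun k => l₂ = d k := by rw [hk₀]; simp
    simpa using (Finset.mem_filter.mp this).2.symm
  have hother : ∀ k, k ≠ k₀ → (d k - l₁) * (d k - l₃) = 0 := by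
    intro k hk
    have hmem : d k ∈ M.charpoly.roots := by
      rw [hroots]
      exact Multiset.mem_map.mpr ⟨k, by simp, rfl⟩
    have h2 : d k ≠ l₂ := fun h2 => hk <| by
      have : k ∈ Finset.univ.filter fun k => l₂ = d k := by simp [h2]
      rw [hk₀] at this
      simpa using this
    have hz : ((X - C l₁) ^ a * (X - C l₂) * (X - C l₃) ^ b).eval (d k) = 0 := by
      rw [← h]
      exact isRoot_of_mem_roots hmem
    simp only [eval_mul, eval_pow, eval_sub, eval_X, eval_C] at hz
    rcases mul_eq_zero.mp hz with hz | hz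
    · rcases mul_eq_zero.mp hz with hz | hz
      · simp [eq_zero_of_pow_eq_zero hz]
      · exact absurd (sub_eq_zero.mp hz) h2
    · simp [eq_zero_of_pow_eq_zero hz]
  set U : Matrix n n ℝ := (hH.eigenvectorUnitary).val with hU
  have hUU : star U * U = 1 := Unitary.coe_star_mul_self _
  have hUU' : U * star U = 1 := Unitary.coe_mul_star_self _
  have hspec : M = U * diagonal d * star U := by
    have := hH.spectral_theorem
    rw [Unitary.conjStarAlgAut_apply] at this
    exact this
  have hM2 : M * M = U * diagonal (fun k => d k * d k) * star U := by
    rw [← diagonal_mul_diagonal]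
    calc M * M = (U * diagonal d * star U) * (U * diagonal d * star U) := by rw [← hspec]
      _ = U * diagonal d * (star U * U) * (diagonal d * star U) := by simp only [mul_assoc]
      _ = _ := by rw [hUU]; simp only [mul_assoc, one_mul]
  have entry : ∀ (f : n → ℝ) (i j : n),
      (U * diagonal f * star U) i j = ∑ k, f k * (U i k * U j k) := by
    intro f i j
    rw [Matrix.mul_apply]
    refine Finset.sum_congr rfl fun k _ => ?_
    rw [Matrix.mul_diagonal]
    simp only [star_apply, star_trivial]
    ring
  refine ⟨fun i => Real.sqrt ((l₂ - l₁) * (l₃ - l₂)) * U i k₀, fun i j hij => ?_⟩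
  have horth : ∑ k, U i k * U j k = 0 := by
    have := entry (fun _ => 1) i j
    simp only [diagonal_one, mul_one, hUU', one_mul, Matrix.one_apply_ne hij] at this
    exact this.symm
  have e1 : M i j = ∑ k, d k * (U i k * U j k) := by
    rw [← entry, ← hspec]
  have e2 : (M * M) i j = ∑ k, d k * d k * (U i k * U j k) := by
    rw [hM2, entry]
  have e3 : (M * M) i j - (l₁ + l₃) * M i j
      = ∑ k, (d k - l₁) * (d k - l₃) * (U i k * U j k) := by
    have : ∑ k, (d k - l₁) * (d k - l₃) * (U i k * U j k)
        = ∑ k, d k * d k * (U i k * U j k) - (l₁ + l₃) * ∑ k, d k * (U i k * U j k)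
          + l₁ * l₃ * ∑ k, U i k * U j k := by
      rw [Finset.mul_sum, Finset.mul_sum, ← Finset.sum_sub_distrib, ← Finset.sum_add_distrib]
      exact Finset.sum_congr rfl fun k _ => by ring
    rw [this, horth, e1, e2]
    ring
  rw [e3, Finset.sum_eq_single k₀ (fun k _ hk => by rw [hother k hk, zero_mul]) (by simp), hk₀']
  have hs := Real.mul_self_sqrt
    (mul_nonneg (sub_nonneg.mpr h12.le) (sub_nonneg.mpr h23.le))
  linear_combination (U i k₀ * U j k₀) * hs

/-- No matrix of `S(G153)` has three distinct eigenvalues of which the middle one is simple; the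
multiplicities `a`, `b` of the outer two are arbitrary. Indices are those of `Fin 6`, so `M 2 3` is
the entry at the vertices `3`, `4`. -/
lemma G153_middle_not_simple (M : Matrix (Fin 6) (Fin 6) ℝ) (a b : ℕ) (l₁ l₂ l₃ : ℝ)
    (hM : inS G153 M) (h12 : l₁ < l₂) (h23 : l₂ < l₃) :
    M.charpoly ≠ (X - C l₁) ^ a * (X - C l₂) * (X - C l₃) ^ b := by
  intro h
  obtain ⟨hsym, hpat⟩ := hM
  obtain ⟨w, hw⟩ := exists_rankOne_offDiag M hsym a b l₁ l₂ l₃ h12 h23 h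
  have hz : ∀ i j : Fin 6, i ≠ j → ¬ G153.Adj i j → M i j = 0 := fun i j hij hn => by
    by_contra h0
    exact hn ((hpat i j hij).mp h0)
  have z03 : M 0 3 = 0 := hz 0 3 (by decide) (by simp [G153])
  have z04 : M 0 4 = 0 := hz 0 4 (by decide) (by simp [G153])
  have z13 : M 1 3 = 0 := hz 1 3 (by decide) (by simp [G153])
  have z14 : M 1 4 = 0 := hz 1 4 (by decide) (by simp [G153])
  have z24 : M 2 4 = 0 := hz 2 4 (by decide) (by simp [G153])
  have z25 : M 2 5 = 0 := hz 2 5 (by decide) (by simp [G153])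
  have z35 : M 3 5 = 0 := hz 3 5 (by decide) (by simp [G153])
  have n23 : M 2 3 ≠ 0 := (hpat 2 3 (by decide)).mpr (by simp [G153])
  have n34 : M 3 4 ≠ 0 := (hpat 3 4 (by decide)).mpr (by simp [G153])
  have n45 : M 4 5 ≠ 0 := (hpat 4 5 (by decide)).mpr (by simp [G153])
  have s53 := hsym.apply 3 5
  have s43 := hsym.apply 3 4
  have s54 := hsym.apply 4 5
  have s10 := hsym.apply 0 1
  have s20 := hsym.apply 0 2
  have s21 := hsym.apply 1 2
  have s32 := hsym.apply 2 3
  have s30 := hsym.apply 0 3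
  have s31 := hsym.apply 1 3
  have w03 := hw 0 3 (by decide)
  have w04 := hw 0 4 (by decide)
  have w13 := hw 1 3 (by decide)
  have w14 := hw 1 4 (by decide)
  have w24 := hw 2 4 (by decide)
  have w25 := hw 2 5 (by decide)
  have w35 := hw 3 5 (by decide)
  simp only [Matrix.mul_apply, Fin.sum_univ_six, s53, s43, s54, s10, s20, s21, s32, s30, s31,
    z03, z04, z13, z14, z24, z25, z35, mul_zero, zero_mul, add_zero, zero_add, sub_zero]
    at w03 w04 w13 w14 w24 w25 w35
  -- Multiply the equations at `35` and `46`, replace `w₃ w₆` by the equation at `36`, and clear the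
  -- mixed products with the equations at `14`, `15`, `24`, `25`.
  have key : (M 2 3 * M 3 4 * M 4 5) ^ 2 = -((w 0 ^ 2 + w 1 ^ 2) * (w 3 * w 4) ^ 2) := by
    have A : (M 2 3 * M 3 4) * (M 3 4 * M 4 5) = -(M 0 2 * M 0 5 + M 1 2 * M 1 5) * (w 3 * w 4) := by
      rw [w24, w35, w25]
      ring
    have B : (M 0 2 * M 2 3) * (M 0 5 * M 4 5) = (w 0 * w 3) * (w 0 * w 4) := by
      rw [w03, w04]
      ring
    have D : (M 1 2 * M 2 3) * (M 1 5 * M 4 5) = (w 1 * w 3) * (w 1 * w 4) := by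
      rw [w13, w14]
      ring
    linear_combination (M 2 3 * M 4 5) * A - (w 3 * w 4) * B - (w 3 * w 4) * D
  have hpos : 0 < (M 2 3 * M 3 4 * M 4 5) ^ 2 := by positivity
  have hnn : 0 ≤ (w 0 ^ 2 + w 1 ^ 2) * (w 3 * w 4) ^ 2 := by positivity
  linarith

theorem G153_not_312_213 :
    (¬ ∃ (M : Matrix (Fin 6) (Fin 6) ℝ) (l₁ l₂ l₃ : ℝ),
        inS G153 M ∧ l₁ < l₂ ∧ l₂ < l₃ ∧
        M.charpoly = (X - C l₁) ^ 3 * (X - C l₂) * (X - C l₃) ^ 2) ∧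
    (¬ ∃ (M : Matrix (Fin 6) (Fin 6) ℝ) (l₁ l₂ l₃ : ℝ),
        inS G153 M ∧ l₁ < l₂ ∧ l₂ < l₃ ∧
        M.charpoly = (X - C l₁) ^ 2 * (X - C l₂) * (X - C l₃) ^ 3) := by
  constructor
  · rintro ⟨M, l₁, l₂, l₃, hM, h12, h23, h⟩
    exact G153_middle_not_simple M 3 2 l₁ l₂ l₃ hM h12 h23 h
  · rintro ⟨M, l₁, l₂, l₃, hM, h12, h23, h⟩
    exact G153_middle_not_simple M 2 3 l₁ l₂ l₃ hM h12 h23 h
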